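/- arXiv:1912.04335 — 3 statements merged into one kernel-verified Lean document; each statement's English description precedes it below -/
import Mathlib

section
/- Let φ̂ > 0. Suppose sequences (x^k) ⊂ ℝ^n, (z^k), (π^k), (ξ^k) ⊂ ℝ^m, (y^k), (η^k), (ζ^k) ⊂ ℝ^p satisfy, for all k: (x^k, z^k, y^k) is feasible for (P̃_φ̂), π^k, ξ^k, η^k, ζ^k ≥ 0, and the sequence ((x^k, z^k, y^k)) is bounded. Suppose further that, with s^k := Ax^k + z^k − b, t₊^k := Cx^k + y^k − d, and t₋^k := −Cx^k + y^k + d: s^k ∘ π^k → 0, z^k ∘ ξ^k → 0, t₊^k ∘ η^k → 0, t₋^k ∘ ζ^k → 0, Hx^k + c − Aᵀπ^k − Cᵀ(η^k − ζ^k) → 0, π^k + ξ^k − φ̂·1 → 0, η^k + ζ^k − φ̂·1 → 0, and limsup_k max{‖π^k‖∞, ‖η^k − ζ^k‖∞} < φ̂. Then (z^k, y^k) → (0, 0), and every limit point x* of (x^k) is an optimal solution of (P). (Core of Proposition 4.2.) -/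
open Matrix Filter

/-- The quadratic objective f(x) = (1/2) xᵀHx + cᵀx. -/
noncomputable def qObj {n : ℕ} (H : Matrix (Fin n) (Fin n) ℝ) (c : Fin n → ℝ)
    (x : Fin n → ℝ) : ℝ :=
  (1 / 2) * (x ⬝ᵥ H.mulVec x) + c ⬝ᵥ x

/-!
A multiplier bounded away from `φ` forces its slack away from the penalty: `π + ξ → φ` and
`‖π‖ ≤ r < φ` keep `ξ` uniformly positive, so `z ∘ ξ → 0` gives `z → 0`. In the same way
`2η = (η + ζ) - (ζ - η)` and `2ζ` stay positive, so `t₊` and `t₋` tend to `0`, and hence so do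
`y = (t₊ + t₋) / 2` and `C x - d = (t₊ - t₋) / 2`. As `π` and `η - ζ` are bounded, along a
convergent subsequence `x` therefore satisfies the Karush–Kuhn–Tucker conditions of the original
problem asymptotically, which is enough for global optimality when the objective is convex.
-/

section Limits

variable {α ι : Type*} [Fintype ι] {l : Filter α}

lemma tendsto_zero_of_mul_of_eventually_le_norm {𝕜 : Type*} [NormedDivisionRing 𝕜]
    {u v : α → 𝕜} {δ : ℝ} (hδ : 0 < δ) (hv : ∀ᶠ k in l, δ ≤ ‖v k‖)
    (huv : Tendsto (fun k => u k * v k) l (nhds 0)) :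
    Tendsto u l (nhds 0) := by
  have hbdd : IsBoundedUnder (· ≤ ·) l ((‖·‖) ∘ v⁻¹) := by
    refine isBoundedUnder_of_eventually_le (a := δ⁻¹) ?_
    filter_upwards [hv] with k hk
    rw [Function.comp_apply, Pi.inv_apply, norm_inv]
    exact inv_anti₀ hδ hk
  refine (huv.zero_mul_isBoundedUnder_le hbdd).congr' ?_
  filter_upwards [hv] with k hk
  exact mul_inv_cancel_right₀ (norm_pos_iff.1 (hδ.trans_le hk)) (u k)

lemma tendsto_zero_of_mul_of_add_tendsto_const {u q v : α → ι → ℝ} {r φ : ℝ} (hr : r < φ)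
    (hq : ∀ᶠ k in l, ‖q k‖ ≤ r)
    (hqv : Tendsto (fun k => q k + v k - fun _ => φ) l (nhds 0))
    (huv : Tendsto (fun k => u k * v k) l (nhds 0)) :
    Tendsto u l (nhds 0) := by
  rw [tendsto_pi_nhds] at hqv huv ⊢
  intro i
  have hδ : 0 < (φ - r) / 2 := by linarith
  refine tendsto_zero_of_mul_of_eventually_le_norm (v := fun k => v k i) hδ ?_ (huv i)
  filter_upwards [hq, (hqv i).eventually (lt_mem_nhds (neg_lt_zero.2 hδ))] with k hqk hsum
  have hqi : q k i ≤ r := (le_abs_self _).trans ((norm_le_pi_norm (q k) i).trans hqk)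
  simp only [Pi.add_apply, Pi.sub_apply] at hsum
  have hvi : (φ - r) / 2 ≤ v k i := by linarith
  exact hvi.trans (Real.le_norm_self _)

lemma tendsto_dotProduct {R : Type*} [TopologicalSpace R] [NonUnitalNonAssocSemiring R]
    [ContinuousAdd R] [ContinuousMul R] {u v : α → ι → R} {a b : ι → R}
    (hu : Tendsto u l (nhds a)) (hv : Tendsto v l (nhds b)) :
    Tendsto (fun k => u k ⬝ᵥ v k) l (nhds (a ⬝ᵥ b)) :=
  ((continuous_fst.dotProduct continuous_snd).tendsto (a, b)).comp (hu.prodMk_nhds hv)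

lemma tendsto_dotProduct_zero_of_mul {u v : α → ι → ℝ}
    (huv : Tendsto (fun k => u k * v k) l (nhds 0)) :
    Tendsto (fun k => u k ⬝ᵥ v k) l (nhds 0) := by
  simpa [dotProduct] using tendsto_dotProduct huv (tendsto_const_nhds (x := (1 : ι → ℝ)))

lemma tendsto_mulVec {κ R : Type*} [TopologicalSpace R] [NonUnitalNonAssocSemiring R]
    [ContinuousAdd R] [ContinuousMul R] (A : Matrix κ ι R) {x : α → ι → R} {a : ι → R}
    (hx : Tendsto x l (nhds a)) :
    Tendsto (fun k => A *ᵥ x k) l (nhds (A *ᵥ a)) :=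
  ((continuous_const.matrix_mulVec continuous_id).tendsto a).comp hx

lemma tendsto_zero_of_add_mul_of_sub_mul {e y η ζ : α → ι → ℝ} {r φ : ℝ} (hr : r < φ)
    (hbound : ∀ᶠ k in l, ‖η k - ζ k‖ ≤ r)
    (hηζ : Tendsto (fun k => η k + ζ k - fun _ => φ) l (nhds 0))
    (htpos : Tendsto (fun k => (y k + e k) * η k) l (nhds 0))
    (htneg : Tendsto (fun k => (y k - e k) * ζ k) l (nhds 0)) :
    Tendsto y l (nhds 0) ∧ Tendsto e l (nhds 0) := by
  have hpos : Tendsto (fun k => y k + e k) l (nhds 0) := by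
    refine tendsto_zero_of_mul_of_add_tendsto_const (q := fun k => ζ k - η k)
      (v := fun k => η k + η k) hr ?_ ?_ ?_
    · simpa only [norm_sub_rev] using hbound
    · exact hηζ.congr fun k => by ring
    · simpa only [mul_add, add_zero] using htpos.add htpos
  have hneg : Tendsto (fun k => y k - e k) l (nhds 0) := by
    refine tendsto_zero_of_mul_of_add_tendsto_const (q := fun k => η k - ζ k)
      (v := fun k => ζ k + ζ k) hr hbound ?_ ?_
    · simpa only [sub_add_add_cancel] using hηζ
    · simpa only [mul_add, add_zero] using htneg.add htneg
  constructor
  · convert (hpos.add hneg).const_smul (2⁻¹ : ℝ) using 2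
    · module
    · simp only [add_zero, smul_zero]
  · convert (hpos.sub hneg).const_smul (2⁻¹ : ℝ) using 2
    · module
    · simp only [sub_zero, smul_zero]

end Limits

section Optimality

variable {ι κ ρ : Type*} [Fintype ι] [Fintype κ] [Fintype ρ]
  {A : Matrix κ ι ℝ} {b : κ → ℝ} {C : Matrix ρ ι ℝ} {d : ρ → ℝ} {w : ι → ℝ}

lemma kkt_residual_le_dotProduct_sub (x g : ι → ℝ) {π : κ → ℝ} (μ : ρ → ℝ) (hπ : 0 ≤ π)
    (hAw : b ≤ A *ᵥ w) (hCw : C *ᵥ w = d) :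
    (g - Aᵀ *ᵥ π - Cᵀ *ᵥ μ) ⬝ᵥ (w - x) - (A *ᵥ x - b) ⬝ᵥ π - (C *ᵥ x - d) ⬝ᵥ μ
      ≤ g ⬝ᵥ (w - x) := by
  have hnonneg : 0 ≤ π ⬝ᵥ (A *ᵥ w - b) :=
    dotProduct_nonneg_of_nonneg hπ (sub_nonneg.2 hAw)
  have hA : (Aᵀ *ᵥ π) ⬝ᵥ (w - x) = π ⬝ᵥ (A *ᵥ w - b) - (A *ᵥ x - b) ⬝ᵥ π := by
    rw [mulVec_transpose, ← dotProduct_mulVec, dotProduct_comm _ π, ← dotProduct_sub,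
      sub_sub_sub_cancel_right, mulVec_sub]
  have hC : (Cᵀ *ᵥ μ) ⬝ᵥ (w - x) = -((C *ᵥ x - d) ⬝ᵥ μ) := by
    rw [mulVec_transpose, ← dotProduct_mulVec, dotProduct_comm _ μ, ← dotProduct_neg, neg_sub,
      mulVec_sub, hCw]
  rw [sub_dotProduct, sub_dotProduct, hA, hC]
  linarith

lemma le_of_asymptotic_kkt {α : Type*} {l : Filter α} [l.NeBot] {f : (ι → ℝ) → ℝ}
    {x g : α → ι → ℝ} {π : α → κ → ℝ} {μ : α → ρ → ℝ} {xstar : ι → ℝ}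
    (hf : ContinuousAt f xstar) (hx : Tendsto x l (nhds xstar))
    (hg : ∀ᶠ k in l, f (x k) + g k ⬝ᵥ (w - x k) ≤ f w)
    (hπ : ∀ᶠ k in l, 0 ≤ π k)
    (hcompA : Tendsto (fun k => (A *ᵥ x k - b) * π k) l (nhds 0))
    (hcompC : Tendsto (fun k => (C *ᵥ x k - d) * μ k) l (nhds 0))
    (hstat : Tendsto (fun k => g k - Aᵀ *ᵥ π k - Cᵀ *ᵥ μ k) l (nhds 0))
    (hAw : b ≤ A *ᵥ w) (hCw : C *ᵥ w = d) :
    f xstar ≤ f w := by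
  have hres := ((tendsto_dotProduct hstat (hx.const_sub w)).sub
    (tendsto_dotProduct_zero_of_mul hcompA)).sub (tendsto_dotProduct_zero_of_mul hcompC)
  have hlim := (hf.tendsto.comp hx).add hres
  simp only [zero_dotProduct, sub_zero, add_zero] at hlim
  refine le_of_tendsto hlim ?_
  filter_upwards [hg, hπ] with k hgk hπk
  exact (add_le_add_right
    (kkt_residual_le_dotProduct_sub (x k) (g k) (μ k) hπk hAw hCw) _).trans hgk

theorem convergence_for_constant_penalty_with_equalities_general
    {α : Type*} {l : Filter α} {f : (ι → ℝ) → ℝ} (hf : Continuous f)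
    {r φ : ℝ} (hr : r < φ)
    {x g : α → ι → ℝ} {z π ξ : α → κ → ℝ} {y η ζ : α → ρ → ℝ}
    (hg : ∀ k w, f (x k) + g k ⬝ᵥ (w - x k) ≤ f w)
    (hfeas : ∀ k, b ≤ A *ᵥ x k + z k) (hπ : ∀ k, 0 ≤ π k)
    (hs : Tendsto (fun k => (A *ᵥ x k + z k - b) * π k) l (nhds 0))
    (hz : Tendsto (fun k => z k * ξ k) l (nhds 0))
    (htpos : Tendsto (fun k => (C *ᵥ x k + y k - d) * η k) l (nhds 0))
    (htneg : Tendsto (fun k => (-(C *ᵥ x k) + y k + d) * ζ k) l (nhds 0))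
    (hstat : Tendsto (fun k => g k - Aᵀ *ᵥ π k - Cᵀ *ᵥ (η k - ζ k)) l (nhds 0))
    (hπξ : Tendsto (fun k => π k + ξ k - fun _ => φ) l (nhds 0))
    (hηζ : Tendsto (fun k => η k + ζ k - fun _ => φ) l (nhds 0))
    (hbound : ∀ᶠ k in l, max ‖π k‖ ‖η k - ζ k‖ ≤ r) :
    Tendsto z l (nhds 0) ∧ Tendsto y l (nhds 0) ∧
      ∀ xstar, MapClusterPt xstar l x →
        b ≤ A *ᵥ xstar ∧ C *ᵥ xstar = d ∧
          ∀ w, b ≤ A *ᵥ w → C *ᵥ w = d → f xstar ≤ f w := by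
  have hπr : ∀ᶠ k in l, ‖π k‖ ≤ r := hbound.mono fun _ h => (le_max_left _ _).trans h
  have hμr : ∀ᶠ k in l, ‖η k - ζ k‖ ≤ r := hbound.mono fun _ h => (le_max_right _ _).trans h
  have hz0 : Tendsto z l (nhds 0) := tendsto_zero_of_mul_of_add_tendsto_const hr hπr hπξ hz
  obtain ⟨hy0, hCx⟩ := tendsto_zero_of_add_mul_of_sub_mul
    (y := y) (e := fun k => C *ᵥ x k - d) hr hμr hηζ
    (htpos.congr fun k => by ring) (htneg.congr fun k => by ring)
  have hcompA : Tendsto (fun k => (A *ᵥ x k - b) * π k) l (nhds 0) := by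
    have hzπ := hz0.zero_mul_isBoundedUnder_le (isBoundedUnder_of_eventually_le hπr)
    have hdiff := hs.sub hzπ
    rw [sub_zero] at hdiff
    exact hdiff.congr fun k => by ring
  have hcompC : Tendsto (fun k => (C *ᵥ x k - d) * (η k - ζ k)) l (nhds 0) :=
    hCx.zero_mul_isBoundedUnder_le (isBoundedUnder_of_eventually_le hμr)
  refine ⟨hz0, hy0, fun xstar hxstar => ?_⟩
  obtain ⟨U, hUl, hxU⟩ := mapClusterPt_iff_ultrafilter.1 hxstar
  refine ⟨?_, ?_, fun w => ?_⟩
  · exact ge_of_tendsto' (by simpa using (tendsto_mulVec A hxU).add (hz0.mono_left hUl)) hfeas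
  · exact sub_eq_zero.1
      (tendsto_nhds_unique ((tendsto_mulVec C hxU).sub_const d) (hCx.mono_left hUl))
  · exact le_of_asymptotic_kkt hf.continuousAt hxU (.of_forall fun k => hg k w)
      (.of_forall hπ) (hcompA.mono_left hUl) (hcompC.mono_left hUl) (hstat.mono_left hUl)

end Optimality

section Quadratic

variable {n : ℕ} {H : Matrix (Fin n) (Fin n) ℝ}

lemma continuous_qObj (H : Matrix (Fin n) (Fin n) ℝ) (c : Fin n → ℝ) :
    Continuous (qObj H c) := by
  unfold qObj
  fun_prop

lemma qObj_eq_add_gradient_add (hH : H.IsSymm) (c x w : Fin n → ℝ) :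
    qObj H c w = qObj H c x + (H *ᵥ x + c) ⬝ᵥ (w - x)
      + (1 / 2) * ((w - x) ⬝ᵥ H *ᵥ (w - x)) := by
  have hcomm : w ⬝ᵥ H *ᵥ x = x ⬝ᵥ H *ᵥ w := by
    rw [dotProduct_mulVec, ← mulVec_transpose, hH.eq, dotProduct_comm]
  simp only [qObj, mulVec_sub, dotProduct_sub, sub_dotProduct, add_dotProduct]
  rw [dotProduct_comm (H *ᵥ x) w, dotProduct_comm (H *ᵥ x) x, hcomm]
  ring

lemma qObj_add_gradient_le (hH : H.PosSemidef) (c x w : Fin n → ℝ) :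
    qObj H c x + (H *ᵥ x + c) ⬝ᵥ (w - x) ≤ qObj H c w := by
  have hcurv : 0 ≤ (w - x) ⬝ᵥ H *ᵥ (w - x) := by
    simpa only [star_trivial] using hH.dotProduct_mulVec_nonneg (w - x)
  rw [qObj_eq_add_gradient_add (isHermitian_iff_isSymm.1 hH.isHermitian) c x w]
  linarith

end Quadratic

/-- core of Proposition 4.2: (z^k, y^k) → (0,0) and every limit
point of (x^k) is an optimal solution of (P), with equality constraints. -/
theorem convergence_for_constant_penalty_with_equalities
    {n m p : ℕ} (H : Matrix (Fin n) (Fin n) ℝ) (hH : H.PosSemidef)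
    (c : Fin n → ℝ) (A : Matrix (Fin m) (Fin n) ℝ) (b : Fin m → ℝ)
    (C : Matrix (Fin p) (Fin n) ℝ) (d : Fin p → ℝ)
    (φhat : ℝ) (hφhat : 0 < φhat)
    (x : ℕ → Fin n → ℝ) (z π ξ : ℕ → Fin m → ℝ) (y η ζ : ℕ → Fin p → ℝ)
    (hfeas1 : ∀ k, b ≤ A.mulVec (x k) + z k) (hz : ∀ k, 0 ≤ z k)
    (hfeas2 : ∀ k, d ≤ C.mulVec (x k) + y k)
    (hfeas3 : ∀ k, -d ≤ -C.mulVec (x k) + y k)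
    (hπ : ∀ k, 0 ≤ π k) (hξ : ∀ k, 0 ≤ ξ k)
    (hη : ∀ k, 0 ≤ η k) (hζ : ∀ k, 0 ≤ ζ k)
    (hbd : ∃ M : ℝ, ∀ k, ‖x k‖ ≤ M ∧ ‖z k‖ ≤ M ∧ ‖y k‖ ≤ M)
    (hcomp1 : Tendsto (fun k => (A.mulVec (x k) + z k - b) * π k) atTop (nhds 0))
    (hcomp2 : Tendsto (fun k => z k * ξ k) atTop (nhds 0))
    (hcomp3 : Tendsto (fun k => (C.mulVec (x k) + y k - d) * η k) atTop (nhds 0))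
    (hcomp4 : Tendsto (fun k => (-C.mulVec (x k) + y k + d) * ζ k) atTop (nhds 0))
    (hstat : Tendsto (fun k => H.mulVec (x k) + c - Aᵀ.mulVec (π k)
      - Cᵀ.mulVec (η k - ζ k)) atTop (nhds 0))
    (hsum1 : Tendsto (fun k => π k + ξ k - fun _ => φhat) atTop (nhds 0))
    (hsum2 : Tendsto (fun k => η k + ζ k - fun _ => φhat) atTop (nhds 0))
    (hlimsup : ∃ r : ℝ, r < φhat ∧
      ∀ᶠ k in atTop, max ‖π k‖ ‖η k - ζ k‖ ≤ r) :
    Tendsto (fun k => z k) atTop (nhds 0) ∧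
    Tendsto (fun k => y k) atTop (nhds 0) ∧
    ∀ xstar : Fin n → ℝ,
      (∃ σ : ℕ → ℕ, StrictMono σ ∧ Tendsto (fun j => x (σ j)) atTop (nhds xstar)) →
      b ≤ A.mulVec xstar ∧ C.mulVec xstar = d ∧
        ∀ x' : Fin n → ℝ, b ≤ A.mulVec x' → C.mulVec x' = d →
          qObj H c xstar ≤ qObj H c x' := by
  obtain ⟨r, hr, hbound⟩ := hlimsup
  obtain ⟨hz0, hy0, hopt⟩ := convergence_for_constant_penalty_with_equalities_general
    (continuous_qObj H c) hr (fun k => qObj_add_gradient_le hH c (x k)) hfeas1 hπ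
    hcomp1 hcomp2 hcomp3 hcomp4 hstat hsum1 hsum2 hbound
  exact ⟨hz0, hy0, fun xstar ⟨_, hσ, hx⟩ => hopt xstar (.of_comp hσ.tendsto_atTop hx.mapClusterPt)⟩
end

section
/- Suppose the system Ax ≥ b, Cx = d has no solution x ∈ ℝ^n. Then the linear program: maximize bᵀπ + dᵀω over (π, ω) ∈ ℝ^m × ℝ^p subject to Aᵀπ + Cᵀω = 0, 0 ≤ π ≤ 1, and −1 ≤ ω ≤ 1, attains its maximum, and its optimal value is strictly positive; consequently every optimal solution (π*, ω*) satisfies π* ≥ 0, Aᵀπ* + Cᵀω* = 0, and bᵀπ* + dᵀω* > 0. (Lemma 5.3.) -/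
open Matrix Filter

/-!
Farkas' lemma holds for finitely many linear functionals on a vector space of any dimension: if
`g` is nonnegative wherever all `f i` are, then `g` lies in the cone they generate (Bartl's
induction on the number of functionals, projecting along a vector that violates the last one).
Restricting to a kernel adds equality constraints. An inhomogeneous system is homogenized by a
variable `t`; infeasibility says that `t ≤ 0` on the homogeneous solutions, and Farkas' lemma turns
this into multipliers with value `1`. Shrunk into the unit box they are a feasible point of the
linear program with positive objective, and compactness of the feasible set gives a maximizer.
-/

section Farkas

variable {𝕜 V ι κ : Type*} [Field 𝕜] [AddCommGroup V] [Module 𝕜 V]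

lemma exists_dotProduct_eq_of_ker_le_ker [Fintype κ] (h : V →ₗ[𝕜] κ → 𝕜)
    (g : Module.Dual 𝕜 V) (hker : LinearMap.ker h ≤ LinearMap.ker g) :
    ∃ w, ∀ x, w ⬝ᵥ h x = g x := by
  classical
  have hrange : g ∈ LinearMap.range h.dualMap := by
    rw [LinearMap.range_dualMap_eq_dualAnnihilator_ker, Submodule.mem_dualAnnihilator]
    exact hker
  obtain ⟨φ, rfl⟩ := hrange
  exact ⟨(dotProductEquiv 𝕜 κ).symm φ, fun x =>
    LinearMap.congr_fun ((dotProductEquiv 𝕜 κ).apply_symm_apply φ) (h x)⟩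

variable [LinearOrder 𝕜] [IsStrictOrderedRing 𝕜]

lemma exists_apply_eq_neg_one_of_not_forall_nonneg {s : Set ι} {a : ι} {f : ι → Module.Dual 𝕜 V}
    {g : Module.Dual 𝕜 V} (hg : ∀ x, (∀ i ∈ insert a s, 0 ≤ f i x) → 0 ≤ g x)
    (hdrop : ¬ ∀ x, (∀ i ∈ s, 0 ≤ f i x) → 0 ≤ g x) :
    ∃ e, (∀ i ∈ s, 0 ≤ f i e) ∧ g e < 0 ∧ f a e = -1 := by
  push Not at hdrop
  obtain ⟨e, hfe, hge⟩ := hdrop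
  have hae : f a e < 0 := by
    by_contra! hae
    exact hge.not_ge (hg e (Set.forall_mem_insert.2 ⟨hae, hfe⟩))
  have hscale : 0 < -(f a e)⁻¹ := neg_pos.2 (inv_lt_zero.2 hae)
  refine ⟨-(f a e)⁻¹ • e, fun i hi => ?_, ?_, ?_⟩
  · simpa only [map_smul, smul_eq_mul] using mul_nonneg hscale.le (hfe i hi)
  · simpa only [map_smul, smul_eq_mul] using mul_neg_of_pos_of_neg hscale hge
  · simp [hae.ne]

lemma mem_hull_image_of_forall_nonneg {s : Set ι} (hs : s.Finite) (f : ι → Module.Dual 𝕜 V)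
    (g : Module.Dual 𝕜 V) (hg : ∀ x, (∀ i ∈ s, 0 ≤ f i x) → 0 ≤ g x) :
    g ∈ PointedCone.hull 𝕜 (f '' s) := by
  induction s, hs using Set.Finite.induction_on generalizing f g with
  | empty =>
    have hg_zero : g = 0 := LinearMap.ext fun x =>
      le_antisymm (by simpa using hg (-x) (by simp)) (hg x (by simp))
    simp [hg_zero]
  | @insert a s _ _ ih =>
    by_cases hdrop : ∀ x, (∀ i ∈ s, 0 ≤ f i x) → 0 ≤ g x
    · exact Submodule.span_mono (Set.image_mono (Set.subset_insert a s)) (ih f g hdrop)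
    obtain ⟨e, hfe, hge, hae⟩ := exists_apply_eq_neg_one_of_not_forall_nonneg hg hdrop
    -- Precompose all functionals with the projection `x ↦ x + f a x • e` onto the kernel of `f a`.
    have hproj : g + g e • f a ∈ PointedCone.hull 𝕜 ((fun i => f i + f i e • f a) '' s) := by
      refine ih _ _ fun x hx => ?_
      simpa [mul_comm] using hg (x + f a x • e) (Set.forall_mem_insert.2
        ⟨by simp [hae], fun i hi => by simpa [mul_comm] using hx i hi⟩)
    have hmem : ∀ i ∈ insert a s, f i ∈ PointedCone.hull 𝕜 (f '' insert a s) :=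
      fun i hi => Submodule.subset_span (Set.mem_image_of_mem f hi)
    have hle : PointedCone.hull 𝕜 ((fun i => f i + f i e • f a) '' s) ≤
        PointedCone.hull 𝕜 (f '' insert a s) := by
      refine Submodule.span_le.2 (Set.image_subset_iff.2 fun i hi => ?_)
      exact add_mem (hmem i (Set.mem_insert_of_mem a hi))
        (PointedCone.smul_mem _ (hfe i hi) (hmem a (Set.mem_insert a s)))
    simpa using add_mem (hle hproj)
      (PointedCone.smul_mem _ (neg_nonneg.2 hge.le) (hmem a (Set.mem_insert a s)))

lemma nonpos_of_smul_le_of_eq_smul_of_infeasible {f : V →ₗ[𝕜] ι → 𝕜} {b : ι → 𝕜}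
    {h : V →ₗ[𝕜] κ → 𝕜} {d : κ → 𝕜} (hinfeas : ¬ ∃ x, b ≤ f x ∧ h x = d) {x : V} {t : 𝕜}
    (hf : t • b ≤ f x) (hh : h x = t • d) : t ≤ 0 := by
  by_contra! ht
  refine hinfeas ⟨t⁻¹ • x, ?_, ?_⟩
  · rw [map_smul]
    exact (le_inv_smul_iff_of_pos ht).2 hf
  · rw [map_smul, hh, inv_smul_smul₀ ht.ne']

variable [Fintype ι] [Fintype κ]

lemma exists_dotProduct_eq_of_forall_nonneg (f : V →ₗ[𝕜] ι → 𝕜) (g : Module.Dual 𝕜 V)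
    (hg : ∀ x, 0 ≤ f x → 0 ≤ g x) : ∃ c, 0 ≤ c ∧ ∀ x, c ⬝ᵥ f x = g x := by
  have hmem := mem_hull_image_of_forall_nonneg Set.finite_univ (fun i => LinearMap.proj i ∘ₗ f) g
    fun x hx => hg x fun i => hx i (Set.mem_univ i)
  rw [Set.image_univ] at hmem
  obtain ⟨c, rfl⟩ := (Submodule.mem_span_range_iff_exists_fun _).1 hmem
  refine ⟨fun i => c i, fun i => (c i).2, fun x => ?_⟩
  simp only [dotProduct, LinearMap.sum_apply]
  rfl

lemma exists_dotProduct_add_dotProduct_eq_of_forall_nonneg (f : V →ₗ[𝕜] ι → 𝕜)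
    (h : V →ₗ[𝕜] κ → 𝕜) (g : Module.Dual 𝕜 V) (hg : ∀ x, 0 ≤ f x → h x = 0 → 0 ≤ g x) :
    ∃ c w, 0 ≤ c ∧ ∀ x, c ⬝ᵥ f x + w ⬝ᵥ h x = g x := by
  obtain ⟨c, hc, hcg⟩ := exists_dotProduct_eq_of_forall_nonneg
    (f ∘ₗ (LinearMap.ker h).subtype) (g ∘ₗ (LinearMap.ker h).subtype) fun x hx => hg x hx x.2
  obtain ⟨w, hw⟩ := exists_dotProduct_eq_of_ker_le_ker h (g - dotProductBilin 𝕜 𝕜 c ∘ₗ f)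
    fun x hx => sub_eq_zero.2 (hcg ⟨x, hx⟩).symm
  exact ⟨c, w, hc, fun x => by simp [hw]⟩

lemma exists_multipliers_of_infeasible (f : V →ₗ[𝕜] ι → 𝕜) (b : ι → 𝕜) (h : V →ₗ[𝕜] κ → 𝕜)
    (d : κ → 𝕜) (hinfeas : ¬ ∃ x, b ≤ f x ∧ h x = d) :
    ∃ π ω, 0 ≤ π ∧ (∀ x, π ⬝ᵥ f x + ω ⬝ᵥ h x = 0) ∧ b ⬝ᵥ π + d ⬝ᵥ ω = 1 := by
  obtain ⟨π, ω, hπ, hπω⟩ := exists_dotProduct_add_dotProduct_eq_of_forall_nonneg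
    (f.coprod (-LinearMap.toSpanSingleton 𝕜 _ b)) (h.coprod (-LinearMap.toSpanSingleton 𝕜 _ d))
    (-LinearMap.snd 𝕜 V 𝕜) fun x hf hh => by
      simpa using nonpos_of_smul_le_of_eq_smul_of_infeasible hinfeas (x := x.1) (t := x.2)
        (by simpa [← sub_eq_add_neg] using hf) (by simpa [← sub_eq_add_neg, sub_eq_zero] using hh)
  refine ⟨π, ω, hπ, fun x => by simpa using hπω (x, 0), ?_⟩
  have hone := hπω (0, 1)
  simp only [LinearMap.coprod_apply, map_zero, zero_add, LinearMap.neg_apply,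
    LinearMap.toSpanSingleton_apply, one_smul, dotProduct_neg, LinearMap.snd_apply] at hone
  rw [dotProduct_comm b, dotProduct_comm d]
  linarith

end Farkas

section LinearProgram

variable {V ι κ : Type*} [AddCommGroup V] [Module ℝ V] [Fintype ι] [Fintype κ]

/-- The feasible region of the linear program searching for a certificate `(π, ω)` that the system
`b ≤ f x`, `h x = d` is infeasible. The constraint `Aᵀπ + Cᵀω = 0` is expressed by pairing with
every `x`, which makes sense for linear maps on a space without a basis. -/
def certificatePolytope (f : V →ₗ[ℝ] ι → ℝ) (h : V →ₗ[ℝ] κ → ℝ) : Set ((ι → ℝ) × (κ → ℝ)) :=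
  {q | (∀ x, q.1 ⬝ᵥ f x + q.2 ⬝ᵥ h x = 0) ∧ q.1 ∈ Set.Icc 0 1 ∧ q.2 ∈ Set.Icc (-1) 1}

/-- The objective `bᵀπ + dᵀω` of the certificate linear program, as a function of the pair
`(π, ω)`. -/
def certificateValue (b : ι → ℝ) (d : κ → ℝ) (q : (ι → ℝ) × (κ → ℝ)) : ℝ :=
  b ⬝ᵥ q.1 + d ⬝ᵥ q.2

lemma continuous_certificateValue (b : ι → ℝ) (d : κ → ℝ) : Continuous (certificateValue b d) :=
  (continuous_const.dotProduct continuous_fst).add (continuous_const.dotProduct continuous_snd)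

lemma isCompact_certificatePolytope (f : V →ₗ[ℝ] ι → ℝ) (h : V →ₗ[ℝ] κ → ℝ) :
    IsCompact (certificatePolytope f h) := by
  have hclosed : IsClosed {q : (ι → ℝ) × (κ → ℝ) | ∀ x, q.1 ⬝ᵥ f x + q.2 ⬝ᵥ h x = 0} := by
    simp only [Set.ofPred_forall]
    exact isClosed_iInter fun x => isClosed_eq ((continuous_fst.dotProduct continuous_const).add
      (continuous_snd.dotProduct continuous_const)) continuous_const
  exact (isCompact_Icc.prod isCompact_Icc).inter_left hclosed

lemma mem_Icc_neg_one_one_of_norm_le_one {v : ι → ℝ} (hv : ‖v‖ ≤ 1) : v ∈ Set.Icc (-1) 1 :=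
  have habs i := abs_le.1 ((norm_le_pi_norm v i).trans hv)
  ⟨fun i => (habs i).1, fun i => (habs i).2⟩

lemma exists_mem_certificatePolytope_value_pos (f : V →ₗ[ℝ] ι → ℝ) (b : ι → ℝ)
    (h : V →ₗ[ℝ] κ → ℝ) (d : κ → ℝ) (hinfeas : ¬ ∃ x, b ≤ f x ∧ h x = d) :
    ∃ q ∈ certificatePolytope f h, 0 < certificateValue b d q := by
  obtain ⟨π, ω, hπ, hπω, hvalue⟩ := exists_multipliers_of_infeasible f b h d hinfeas
  obtain ⟨r, hr, hsmall⟩ := exists_pos_mul_lt one_pos ‖(π, ω)‖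
  have hnorm : ‖r • (π, ω)‖ ≤ 1 := by
    rw [norm_smul_of_nonneg hr.le, mul_comm]
    exact hsmall.le
  refine ⟨r • (π, ω), ⟨fun x => ?_, ⟨smul_nonneg hr.le hπ, ?_⟩, ?_⟩, ?_⟩
  · simp [← mul_add, hπω]
  · exact (mem_Icc_neg_one_one_of_norm_le_one ((norm_fst_le _).trans hnorm)).2
  · exact mem_Icc_neg_one_one_of_norm_le_one ((norm_snd_le _).trans hnorm)
  · simpa [certificateValue, ← mul_add, hvalue] using hr

theorem infeasibility_certificate_general (f : V →ₗ[ℝ] ι → ℝ) (b : ι → ℝ) (h : V →ₗ[ℝ] κ → ℝ)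
    (d : κ → ℝ) (hinfeas : ¬ ∃ x, b ≤ f x ∧ h x = d) :
    (∃ q ∈ certificatePolytope f h,
      IsMaxOn (certificateValue b d) (certificatePolytope f h) q ∧ 0 < certificateValue b d q) ∧
    ∀ q ∈ certificatePolytope f h,
      IsMaxOn (certificateValue b d) (certificatePolytope f h) q →
      0 ≤ q.1 ∧ (∀ x, q.1 ⬝ᵥ f x + q.2 ⬝ᵥ h x = 0) ∧ 0 < certificateValue b d q := by
  obtain ⟨q₀, hq₀, hpos⟩ := exists_mem_certificatePolytope_value_pos f b h d hinfeas
  obtain ⟨q, hq, hmax⟩ := (isCompact_certificatePolytope f h).exists_isMaxOn ⟨q₀, hq₀⟩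
    (continuous_certificateValue b d).continuousOn
  exact ⟨⟨q, hq, hmax, hpos.trans_le (hmax hq₀)⟩,
    fun q hq hmax => ⟨hq.2.1.1, hq.1, hpos.trans_le (hmax hq₀)⟩⟩

end LinearProgram

section Matrix

lemma transpose_mulVec_add_transpose_mulVec_eq_zero_iff {R m n p : Type*} [CommSemiring R]
    [Fintype m] [Fintype n] [Fintype p] (A : Matrix m n R) (C : Matrix p n R) (π : m → R)
    (ω : p → R) :
    Aᵀ *ᵥ π + Cᵀ *ᵥ ω = 0 ↔ ∀ x, π ⬝ᵥ A *ᵥ x + ω ⬝ᵥ C *ᵥ x = 0 := by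
  simp only [mulVec_transpose, dotProduct_mulVec, ← add_dotProduct, dotProduct_eq_zero_iff]

lemma mk_mem_certificatePolytope_mulVecLin_iff {m n p : Type*} [Fintype m] [Fintype n] [Fintype p]
    {A : Matrix m n ℝ} {C : Matrix p n ℝ} {π : m → ℝ} {ω : p → ℝ} :
    (π, ω) ∈ certificatePolytope A.mulVecLin C.mulVecLin ↔ Aᵀ *ᵥ π + Cᵀ *ᵥ ω = 0 ∧
      (∀ i, 0 ≤ π i ∧ π i ≤ 1) ∧ ∀ j, -1 ≤ ω j ∧ ω j ≤ 1 := by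
  simp [certificatePolytope, transpose_mulVec_add_transpose_mulVec_eq_zero_iff, Pi.le_def,
    forall_and]

end Matrix

/-- Lemma 5.3: if Ax ≥ b, Cx = d is infeasible, then the
Farkas-type linear program attains its maximum, its optimal value is strictly
positive, and consequently every optimal solution provides an infeasibility
certificate. -/
theorem infeasibility_certificate
    {n m p : ℕ} (A : Matrix (Fin m) (Fin n) ℝ) (b : Fin m → ℝ)
    (C : Matrix (Fin p) (Fin n) ℝ) (d : Fin p → ℝ)
    (hinfeas : ¬ ∃ x : Fin n → ℝ, b ≤ A.mulVec x ∧ C.mulVec x = d) :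
    (∃ (πs : Fin m → ℝ) (ωs : Fin p → ℝ),
      (Aᵀ.mulVec πs + Cᵀ.mulVec ωs = 0 ∧ (∀ i, 0 ≤ πs i ∧ πs i ≤ 1) ∧
        (∀ j, -1 ≤ ωs j ∧ ωs j ≤ 1)) ∧
      (∀ (π : Fin m → ℝ) (ω : Fin p → ℝ),
        Aᵀ.mulVec π + Cᵀ.mulVec ω = 0 → (∀ i, 0 ≤ π i ∧ π i ≤ 1) →
        (∀ j, -1 ≤ ω j ∧ ω j ≤ 1) →
        b ⬝ᵥ π + d ⬝ᵥ ω ≤ b ⬝ᵥ πs + d ⬝ᵥ ωs) ∧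
      0 < b ⬝ᵥ πs + d ⬝ᵥ ωs) ∧
    (∀ (πs : Fin m → ℝ) (ωs : Fin p → ℝ),
      (Aᵀ.mulVec πs + Cᵀ.mulVec ωs = 0 ∧ (∀ i, 0 ≤ πs i ∧ πs i ≤ 1) ∧
        (∀ j, -1 ≤ ωs j ∧ ωs j ≤ 1)) →
      (∀ (π : Fin m → ℝ) (ω : Fin p → ℝ),
        Aᵀ.mulVec π + Cᵀ.mulVec ω = 0 → (∀ i, 0 ≤ π i ∧ π i ≤ 1) →
        (∀ j, -1 ≤ ω j ∧ ω j ≤ 1) →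
        b ⬝ᵥ π + d ⬝ᵥ ω ≤ b ⬝ᵥ πs + d ⬝ᵥ ωs) →
      0 ≤ πs ∧ Aᵀ.mulVec πs + Cᵀ.mulVec ωs = 0 ∧ 0 < b ⬝ᵥ πs + d ⬝ᵥ ωs) := by
  simpa only [Prod.exists, Prod.forall, mk_mem_certificatePolytope_mulVecLin_iff, isMaxOn_iff,
    certificateValue, mulVecLin_apply, ← transpose_mulVec_add_transpose_mulVec_eq_zero_iff, and_imp]
    using infeasibility_certificate_general A.mulVecLin b C.mulVecLin d hinfeas
end

section
/- Assume the set of optimal solutions of (P) — points x with Ax ≥ b and Cx = d that minimize f over {x : Ax ≥ b, Cx = d} — is nonempty and bounded. Then for every φ > 0, every ρ > 0, and every α ∈ ℝ, the set {(x, z, y) ∈ ℝ^n × ℝ^m × ℝ^p : z ≥ 0, y ≥ 0, Ax + z ≥ b, Cx + y ≥ d, −Cx + y ≥ −d, f(x) + φ·(1ᵀz + 1ᵀy) ≤ α, max{‖z‖∞, ‖y‖∞} ≤ ρ} is bounded. (Third claim of Lemma 4.0.) -/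
open Matrix Filter

/-!
The optimal set of a convex program is a common sublevel set of convex functions: the constraints,
and the objective at the level of its minimum. If such a set contains `x₀` and lies in the open ball
of radius `R` about `x₀`, then raising the levels keeps it bounded. Otherwise, slide far-away points
`x` of the enlarged set along the segment to `x₀` down to the sphere of radius `R`. By convexity
each original level is then exceeded by at most a constant times `R / dist x x₀`, so a limit point
on the sphere would belong to the original set.
-/

section ConvexSublevel

open Bornology Set Topology

theorem map_lineMap_le_of_convexOn {E : Type*} [AddCommGroup E] [Module ℝ E] {f : E → ℝ}
    (hf : ConvexOn ℝ univ f) {x y : E} {r s t : ℝ} (hx : f x ≤ r) (hy : f y ≤ s)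
    (ht₀ : 0 ≤ t) (ht₁ : t ≤ 1) :
    f (AffineMap.lineMap x y t) ≤ AffineMap.lineMap r s t := by
  simp only [AffineMap.lineMap_apply_module]
  calc f ((1 - t) • x + t • y)
      ≤ (1 - t) • f x + t • f y :=
        hf.2 (mem_univ x) (mem_univ y) (sub_nonneg.2 ht₁) ht₀ (sub_add_cancel 1 t)
    _ ≤ (1 - t) • r + t • s :=
        add_le_add (smul_le_smul_of_nonneg_left hx (sub_nonneg.2 ht₁))
          (smul_le_smul_of_nonneg_left hy ht₀)

variable {E : Type*} [NormedAddCommGroup E] [NormedSpace ℝ E] [FiniteDimensional ℝ E]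
  {ι κ : Type*}

theorem exists_dist_eq_forall_le_of_not_isBounded {g : ι → E → ℝ}
    (hg : ∀ i, ConvexOn ℝ univ (g i)) {β γ : ι → ℝ} {x₀ : E} (hx₀ : ∀ i, g i x₀ ≤ β i)
    (hγ : ¬ IsBounded {x | ∀ i, g i x ≤ γ i}) {R : ℝ} (hR : 0 ≤ R) :
    ∃ w, dist w x₀ = R ∧ ∀ i, g i w ≤ β i := by
  have : ProperSpace E := FiniteDimensional.proper ℝ E
  have : (cobounded E ⊓ 𝓟 {x | ∀ i, g i x ≤ γ i}).NeBot :=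
    frequently_mem_iff_neBot.1 (mt isBounded_def.2 hγ)
  let U := Ultrafilter.of (cobounded E ⊓ 𝓟 {x | ∀ i, g i x ≤ γ i})
  have hU_cobounded : (U : Filter E) ≤ cobounded E := (Ultrafilter.of_le _).trans inf_le_left
  have hU_mem : ∀ᶠ x in (U : Filter E), ∀ i, g i x ≤ γ i :=
    le_principal_iff.1 ((Ultrafilter.of_le _).trans inf_le_right)
  have h_dist : Tendsto (dist · x₀) U atTop :=
    (Metric.tendsto_dist_right_cobounded_atTop x₀).mono_left hU_cobounded
  let τ : E → ℝ := fun x => R / dist x x₀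
  have hτ : Tendsto τ U (𝓝 0) := h_dist.const_div_atTop R
  let p : E → E := fun x => AffineMap.lineMap x₀ x (τ x)
  have hp_sphere : ∀ᶠ x in (U : Filter E), p x ∈ Metric.sphere x₀ R := by
    filter_upwards [h_dist.eventually_gt_atTop 0] with x hx
    rw [Metric.mem_sphere, dist_lineMap_left, dist_comm x₀ x,
      Real.norm_of_nonneg (div_nonneg hR hx.le), div_mul_cancel₀ R hx.ne']
  obtain ⟨w, hw_sphere, hw⟩ := (isCompact_sphere x₀ R).ultrafilter_le_nhds' (U.map p) hp_sphere
  refine ⟨w, hw_sphere, fun i => ?_⟩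
  have h_level : Tendsto (fun x => AffineMap.lineMap (β i) (γ i) (τ x)) U (𝓝 (β i)) := by
    simpa using tendsto_const_nhds.lineMap tendsto_const_nhds hτ
  refine le_of_tendsto_of_tendsto (((hg i).locallyLipschitz.continuous.tendsto w).comp hw)
    h_level ?_
  filter_upwards [hU_mem, hτ.eventually_le_const one_pos] with x hx hτ₁
  exact map_lineMap_le_of_convexOn (hg i) (hx₀ i) (hx i) (div_nonneg hR dist_nonneg) hτ₁

theorem isBounded_setOf_forall_le_of_convexOn {g : ι → E → ℝ}
    (hg : ∀ i, ConvexOn ℝ univ (g i)) {β : ι → ℝ} (hne : {x | ∀ i, g i x ≤ β i}.Nonempty)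
    (hbd : IsBounded {x | ∀ i, g i x ≤ β i}) (γ : ι → ℝ) :
    IsBounded {x | ∀ i, g i x ≤ γ i} := by
  obtain ⟨x₀, hx₀⟩ := hne
  obtain ⟨R, hR, hball⟩ := hbd.subset_ball_lt 0 x₀
  by_contra hγ
  obtain ⟨w, hw_dist, hw⟩ := exists_dist_eq_forall_le_of_not_isBounded hg hx₀ hγ hR.le
  exact (Metric.mem_ball.1 (hball hw)).ne hw_dist

theorem isBounded_relaxed_sublevel_of_isBounded_minimizers {f : E → ℝ}
    (hf : ConvexOn ℝ univ f) {g : ι → E → ℝ} (hg : ∀ i, ConvexOn ℝ univ (g i)) {β : ι → ℝ}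
    (hne : {x | (∀ i, g i x ≤ β i) ∧ ∀ x', (∀ i, g i x' ≤ β i) → f x ≤ f x'}.Nonempty)
    (hbd : IsBounded {x | (∀ i, g i x ≤ β i) ∧ ∀ x', (∀ i, g i x' ≤ β i) → f x ≤ f x'})
    (γ : ι → ℝ) (α : ℝ) :
    IsBounded {x | (∀ i, g i x ≤ γ i) ∧ f x ≤ α} := by
  obtain ⟨x₀, hx₀, hmin⟩ := hne
  have hconvex : ∀ o : Option ι, ConvexOn ℝ univ (o.elim f g) := Option.forall.2 ⟨hf, hg⟩
  have hbounded : IsBounded {x | ∀ o : Option ι, o.elim f g x ≤ o.elim (f x₀) β} :=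
    hbd.subset fun x hx =>
      ⟨fun i => hx (some i), fun x' hx' => (hx none).trans (hmin x' hx')⟩
  refine (isBounded_setOf_forall_le_of_convexOn hconvex ⟨x₀, Option.forall.2 ⟨le_rfl, hx₀⟩⟩
    hbounded fun o => o.elim α γ).subset ?_
  exact fun x ⟨hx, hfx⟩ => Option.forall.2 ⟨hfx, hx⟩

theorem isBounded_relaxed_polyhedron_sublevel_of_isBounded_minimizers {f : E → ℝ}
    (hf : ConvexOn ℝ univ f) (A : E →ₗ[ℝ] ι → ℝ) (b : ι → ℝ) (C : E →ₗ[ℝ] κ → ℝ) (d : κ → ℝ)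
    (hne : {x | (b ≤ A x ∧ C x = d) ∧ ∀ x', b ≤ A x' → C x' = d → f x ≤ f x'}.Nonempty)
    (hbd : IsBounded {x | (b ≤ A x ∧ C x = d) ∧ ∀ x', b ≤ A x' → C x' = d → f x ≤ f x'})
    (r : ι → ℝ) (s : κ → ℝ) (α : ℝ) :
    IsBounded {x | (b - r ≤ A x ∧ ∀ j, dist (C x j) (d j) ≤ s j) ∧ f x ≤ α} := by
  let g : ι ⊕ κ → E → ℝ := Sum.elim (fun i x => -A x i) (fun j x => dist (C x j) (d j))
  have hg : ∀ k, ConvexOn ℝ univ (g k) := Sum.forall.2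
    ⟨fun i => (-(LinearMap.proj i ∘ₗ A)).convexOn convex_univ,
      fun j => (convexOn_univ_dist (d j)).comp_linearMap
        ((LinearMap.proj j : (κ → ℝ) →ₗ[ℝ] ℝ) ∘ₗ C)⟩
  have hfeasible (x : E) : (∀ k, g k x ≤ Sum.elim (-b) 0 k) ↔ b ≤ A x ∧ C x = d := by
    simp [g, Sum.forall, Pi.le_def, funext_iff]
  have hrelaxed (x : E) : (∀ k, g k x ≤ Sum.elim (r - b) s k) ↔
      b - r ≤ A x ∧ ∀ j, dist (C x j) (d j) ≤ s j := by
    simp [g, Sum.forall, Pi.le_def, neg_le]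
  simpa only [hfeasible, hrelaxed, and_imp] using
    isBounded_relaxed_sublevel_of_isBounded_minimizers hf hg (β := Sum.elim (-b) 0)
      (by simpa only [hfeasible, and_imp] using hne)
      (by simpa only [hfeasible, and_imp] using hbd) (Sum.elim (r - b) s) α

theorem abs_sum_le_card_mul_norm [Fintype ι] (z : ι → ℝ) :
    |∑ i, z i| ≤ Fintype.card ι * ‖z‖ := by
  simpa only [nsmul_eq_mul] using
    (Finset.abs_sum_le_sum_abs z Finset.univ).trans (Pi.sum_norm_apply_le_norm z)

theorem level_sets_bounded_with_equalities_general [Fintype ι] [Fintype κ] {f : E → ℝ}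
    (hf : ConvexOn ℝ univ f) (A : E →ₗ[ℝ] ι → ℝ) (b : ι → ℝ) (C : E →ₗ[ℝ] κ → ℝ) (d : κ → ℝ)
    (hne : {x | (b ≤ A x ∧ C x = d) ∧ ∀ x', b ≤ A x' → C x' = d → f x ≤ f x'}.Nonempty)
    (hbd : IsBounded {x | (b ≤ A x ∧ C x = d) ∧ ∀ x', b ≤ A x' → C x' = d → f x ≤ f x'})
    (φ ρ α : ℝ) :
    IsBounded {q : E × (ι → ℝ) × (κ → ℝ) |
      b ≤ A q.1 + q.2.1 ∧ d ≤ C q.1 + q.2.2 ∧ -d ≤ -C q.1 + q.2.2 ∧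
      f q.1 + φ * ((∑ i, q.2.1 i) + ∑ j, q.2.2 j) ≤ α ∧ max ‖q.2.1‖ ‖q.2.2‖ ≤ ρ} := by
  let M : ℝ := |φ| * (Fintype.card ι * ρ + Fintype.card κ * ρ)
  have hx_bounded := isBounded_relaxed_polyhedron_sublevel_of_isBounded_minimizers hf A b C d
    hne hbd (fun _ => ρ) (fun _ => ρ) (α + M)
  refine (hx_bounded.prod (Metric.isBounded_closedBall (x := 0) (r := ρ) |>.prod
    (Metric.isBounded_closedBall (x := 0) (r := ρ)))).subset ?_
  rintro ⟨x, z, y⟩ ⟨hA, hC, hC', hfx, hmax⟩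
  obtain ⟨hz, hy⟩ := max_le_iff.1 hmax
  have hz_le (i : ι) : z i ≤ ρ := (le_abs_self _).trans ((norm_le_pi_norm z i).trans hz)
  have hy_le (j : κ) : y j ≤ ρ := (le_abs_self _).trans ((norm_le_pi_norm y j).trans hy)
  have hpenalty : |φ * ((∑ i, z i) + ∑ j, y j)| ≤ M := by
    rw [abs_mul]
    refine mul_le_mul_of_nonneg_left ((abs_add_le _ _).trans (add_le_add ?_ ?_)) (abs_nonneg φ)
    · exact (abs_sum_le_card_mul_norm z).trans (by gcongr)
    · exact (abs_sum_le_card_mul_norm y).trans (by gcongr)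
  refine ⟨⟨⟨fun i => ?_, fun j => ?_⟩, ?_⟩, mem_closedBall_zero_iff.2 hz,
    mem_closedBall_zero_iff.2 hy⟩
  · exact sub_le_iff_le_add.2 ((hA i).trans (add_le_add_right (hz_le i) _))
  · have hlower : d j ≤ C x j + y j := hC j
    have hupper : -d j ≤ -C x j + y j := hC' j
    rw [Real.dist_eq, abs_le]
    constructor <;> linarith [hy_le j]
  · change f x ≤ α + M
    linarith [neg_le_of_abs_le hpenalty]

end ConvexSublevel

theorem convexOn_dotProduct_mulVec_of_posSemidef {ι : Type*} [Fintype ι] {H : Matrix ι ι ℝ}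
    (hH : H.PosSemidef) : ConvexOn ℝ Set.univ fun x : ι → ℝ => x ⬝ᵥ H *ᵥ x := by
  refine ⟨convex_univ, fun x _ y _ s t hs ht hst => ?_⟩
  have hdefect : s * (x ⬝ᵥ H *ᵥ x) + t * (y ⬝ᵥ H *ᵥ y)
      - (s • x + t • y) ⬝ᵥ H *ᵥ (s • x + t • y) = s * t * ((x - y) ⬝ᵥ H *ᵥ (x - y)) := by
    obtain rfl : t = 1 - s := eq_sub_of_add_eq' hst
    simp only [mulVec_add, mulVec_sub, mulVec_smul, dotProduct_add, dotProduct_sub,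
      dotProduct_smul, add_dotProduct, sub_dotProduct, smul_dotProduct, smul_eq_mul]
    ring
  refine sub_nonneg.1 (hdefect.symm ▸ ?_)
  exact mul_nonneg (mul_nonneg hs ht) (hH.dotProduct_mulVec_nonneg (x - y))

theorem convexOn_qObj {n : ℕ} {H : Matrix (Fin n) (Fin n) ℝ} (hH : H.PosSemidef)
    (c : Fin n → ℝ) : ConvexOn ℝ Set.univ (qObj H c) :=
  ((convexOn_dotProduct_mulVec_of_posSemidef hH).smul one_half_pos.le).add
    ((dotProductBilin ℝ ℝ c).convexOn convex_univ)

/-- third claim of Lemma 4.0: boundedness of level sets with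
bounded relaxation variables, in the presence of equality constraints. -/
theorem level_sets_bounded_with_equalities
    {n m p : ℕ} (H : Matrix (Fin n) (Fin n) ℝ) (hH : H.PosSemidef)
    (c : Fin n → ℝ) (A : Matrix (Fin m) (Fin n) ℝ) (b : Fin m → ℝ)
    (C : Matrix (Fin p) (Fin n) ℝ) (d : Fin p → ℝ)
    (hne : {x : Fin n → ℝ | (b ≤ A.mulVec x ∧ C.mulVec x = d) ∧
      ∀ x' : Fin n → ℝ, b ≤ A.mulVec x' → C.mulVec x' = d →
        qObj H c x ≤ qObj H c x'}.Nonempty)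
    (hbd : Bornology.IsBounded {x : Fin n → ℝ | (b ≤ A.mulVec x ∧ C.mulVec x = d) ∧
      ∀ x' : Fin n → ℝ, b ≤ A.mulVec x' → C.mulVec x' = d →
        qObj H c x ≤ qObj H c x'})
    (φ : ℝ) (hφ : 0 < φ) (ρ : ℝ) (hρ : 0 < ρ) (α : ℝ) :
    Bornology.IsBounded {q : (Fin n → ℝ) × (Fin m → ℝ) × (Fin p → ℝ) |
      0 ≤ q.2.1 ∧ 0 ≤ q.2.2 ∧ b ≤ A.mulVec q.1 + q.2.1 ∧
      d ≤ C.mulVec q.1 + q.2.2 ∧ -d ≤ -C.mulVec q.1 + q.2.2 ∧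
      qObj H c q.1 + φ * ((∑ i, q.2.1 i) + ∑ j, q.2.2 j) ≤ α ∧
      max ‖q.2.1‖ ‖q.2.2‖ ≤ ρ} :=
  (level_sets_bounded_with_equalities_general (convexOn_qObj hH c) A.mulVecLin b C.mulVecLin d
    hne hbd φ ρ α).subset fun _ ⟨_, _, hq⟩ => hq
end
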